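/- Let ω = (x, y, θ) and ω' = (x', y', θ') be elements of ℝ² × ℝ with |θ'| ≤ 1, and let ℓ' be the line through the point (x', y') with direction vector (1, θ'). Then d(ω, ω')/√2 ≤ dist((x, y), ℓ') ≤ d(ω, ω'), where dist((x,y), ℓ') is the Euclidean distance from the point (x, y) to the line ℓ'. -/

import Mathlib

/-- The vertical distance `d(ω, ω') = |y − y' − θ'(x − x')|`. -/
def vdist (ω ω' : ℝ × ℝ × ℝ) : ℝ :=
  |ω.2.1 - ω'.2.1 - ω'.2.2 * (ω.1 - ω'.1)|

/-- The point of `ℝ²` (with the Euclidean metric) with coordinates `(a, b)`. -/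
noncomputable def toE2 (a b : ℝ) : EuclideanSpace ℝ (Fin 2) :=
  (WithLp.equiv 2 (Fin 2 → ℝ)).symm ![a, b]

/-!
The line of slope `θ'` is the hyperplane through `(x', y')` with normal vector `n = (-θ', 1)`, and
`⟪n, (x, y) - (x', y')⟫` is the vertical displacement, so the distance to the line is exactly
`d(ω, ω') / ‖n‖ = d(ω, ω') / √(1 + θ' ^ 2)`; for `|θ'| ≤ 1` the denominator lies in `[1, √2]`.
-/

section InnerProductSpace

variable {𝕜 V P : Type*} [RCLike 𝕜] [NormedAddCommGroup V] [InnerProductSpace 𝕜 V]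

theorem span_singleton_eq_orthogonal_of_inner_eq_zero [Fact (Module.finrank 𝕜 V = 2)] {v n : V}
    (hv : v ≠ 0) (hn : n ≠ 0) (hnv : inner 𝕜 n v = 0) :
    Submodule.span 𝕜 {v} = (Submodule.span 𝕜 {n})ᗮ := by
  have : FiniteDimensional 𝕜 V := .of_fact_finrank_eq_two
  apply Submodule.eq_of_le_of_finrank_eq
  · rwa [Submodule.span_singleton_le_iff_mem, Submodule.mem_orthogonal_singleton_iff_inner_right]
  · rw [finrank_span_singleton hv, Submodule.finrank_orthogonal_span_singleton (n := 1) hn]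

theorem norm_starProjection_span_singleton (n u : V) :
    ‖(Submodule.span 𝕜 {n}).starProjection u‖ = ‖inner 𝕜 n u‖ / ‖n‖ := by
  obtain rfl | hn := eq_or_ne n 0
  · simp
  · have : ‖n‖ ≠ 0 := norm_ne_zero_iff.mpr hn
    rw [Submodule.starProjection_singleton, norm_smul, norm_div, RCLike.norm_ofReal,
      abs_of_nonneg (sq_nonneg _)]
    field_simp

variable [MetricSpace P] [NormedAddTorsor V P] {s : AffineSubspace 𝕜 P} {q : P}

theorem infDist_eq_norm_starProjection_orthogonal [s.direction.HasOrthogonalProjection]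
    (hq : q ∈ s) (p : P) :
    Metric.infDist p s = ‖s.directionᗮ.starProjection (p -ᵥ q)‖ := by
  have : Nonempty s := ⟨⟨q, hq⟩⟩
  rw [← EuclideanGeometry.dist_orthogonalProjection_eq_infDist,
    EuclideanGeometry.orthogonalProjection_apply_mem s hq, dist_eq_norm_vsub V,
    vsub_vadd_eq_vsub_sub, Submodule.starProjection_orthogonal_val, Submodule.starProjection_apply]

theorem infDist_eq_norm_inner_div_norm {n : V} (hs : s.direction = (Submodule.span 𝕜 {n})ᗮ)
    (hq : q ∈ s) (p : P) :
    Metric.infDist p s = ‖inner 𝕜 n (p -ᵥ q)‖ / ‖n‖ := by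
  have : s.direction.HasOrthogonalProjection := hs ▸ inferInstance
  rw [infDist_eq_norm_starProjection_orthogonal hq, ← norm_starProjection_span_singleton]
  simp only [hs, Submodule.orthogonal_orthogonal]

end InnerProductSpace

theorem norm_toE2 (a b : ℝ) : ‖toE2 a b‖ = √(a ^ 2 + b ^ 2) := by
  simp [toE2, EuclideanSpace.norm_eq]

theorem inner_toE2 (a b c d : ℝ) : inner ℝ (toE2 a b) (toE2 c d) = a * c + b * d := by
  simp [toE2, PiLp.inner_apply, mul_comm]

theorem toE2_sub_toE2 (a b c d : ℝ) : toE2 a b - toE2 c d = toE2 (a - c) (b - d) := by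
  simp [toE2, ← WithLp.toLp_sub]

theorem toE2_eq_zero_iff {a b : ℝ} : toE2 a b = 0 ↔ a = 0 ∧ b = 0 := by
  simp [toE2]

theorem span_toE2_eq_orthogonal {a b : ℝ} (h : toE2 a b ≠ 0) :
    Submodule.span ℝ {toE2 a b} = (Submodule.span ℝ {toE2 (-b) a})ᗮ := by
  have : Fact (Module.finrank ℝ (EuclideanSpace ℝ (Fin 2)) = 2) := ⟨finrank_euclideanSpace_fin⟩
  refine span_singleton_eq_orthogonal_of_inner_eq_zero h ?_ ?_
  · rwa [Ne, toE2_eq_zero_iff, neg_eq_zero, and_comm, ← toE2_eq_zero_iff]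
  · rw [inner_toE2]
    ring

theorem stmt8_general (x y θ x' y' θ' : ℝ)
    (ℓ' : AffineSubspace ℝ (EuclideanSpace ℝ (Fin 2)))
    (hℓ' : ℓ' = AffineSubspace.mk' (toE2 x' y') (Submodule.span ℝ {toE2 1 θ'})) :
    Metric.infDist (toE2 x y) (ℓ' : Set (EuclideanSpace ℝ (Fin 2))) =
      vdist (x, y, θ) (x', y', θ') / √(1 + θ' ^ 2) := by
  have hdir : ℓ'.direction = (Submodule.span ℝ {toE2 (-θ') 1})ᗮ := by
    rw [hℓ', AffineSubspace.direction_mk']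
    exact span_toE2_eq_orthogonal (by simp [toE2_eq_zero_iff])
  have hmem : toE2 x' y' ∈ ℓ' := hℓ' ▸ AffineSubspace.self_mem_mk' _ _
  rw [infDist_eq_norm_inner_div_norm hdir hmem, vsub_eq_sub, toE2_sub_toE2, inner_toE2, norm_toE2,
    Real.norm_eq_abs, vdist]
  ring_nf

/-- Let `ω = (x, y, θ)` and `ω' = (x', y', θ')` be elements of `ℝ² × ℝ` with
`|θ'| ≤ 1`, and let `ℓ'` be the line through the point `(x', y')` with direction vector
`(1, θ')`. Then `d(ω, ω')/√2 ≤ dist((x, y), ℓ') ≤ d(ω, ω')`. -/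
theorem stmt8 (x y θ x' y' θ' : ℝ) (hθ' : |θ'| ≤ 1)
    (ℓ' : AffineSubspace ℝ (EuclideanSpace ℝ (Fin 2)))
    (hℓ' : ℓ' = AffineSubspace.mk' (toE2 x' y') (Submodule.span ℝ {toE2 1 θ'})) :
    vdist (x, y, θ) (x', y', θ') / Real.sqrt 2 ≤
      Metric.infDist (toE2 x y) (ℓ' : Set (EuclideanSpace ℝ (Fin 2))) ∧
    Metric.infDist (toE2 x y) (ℓ' : Set (EuclideanSpace ℝ (Fin 2))) ≤
      vdist (x, y, θ) (x', y', θ') := by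
  rw [stmt8_general x y θ x' y' θ' ℓ' hℓ']
  have hsq : θ' ^ 2 ≤ 1 := (sq_le_one_iff_abs_le_one θ').mpr hθ'
  exact ⟨div_le_div_of_nonneg_left (abs_nonneg _) (by positivity) (Real.sqrt_le_sqrt (by linarith)),
    div_le_self (abs_nonneg _) (Real.one_le_sqrt.mpr (le_add_of_nonneg_right (sq_nonneg θ')))⟩
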